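/- Let u, b : ℝ³ → ℝ³ be smooth Schwartz-class vector fields with ∇·u = 0 and ∇·b = 0. Then − ∫_{ℝ³} (u·∇u)·Δu + ∫_{ℝ³} (b·∇b)·Δu − ∫_{ℝ³} (u·∇b)·Δb + ∫_{ℝ³} (b·∇u)·Δb ≤ ‖∇u‖₃³ + 3 ‖∇u‖₃ ‖∇b‖₃², where ‖∇u‖₃ denotes the L³(ℝ³) norm of the full gradient matrix of u. -/

import Mathlib

/-!
The convective terms are integrated by parts. With `N(v,w,z) = ∫ (v·∇w)·Δz`, moving one derivative
off `Δz` gives `N(v,w,z) = -Q(v,w,z) - R(v,w,z)`, where `Q(v,w,z) = ∫ ∑ ∂ₖvⱼ ∂ⱼwᵢ ∂ₖzᵢ` and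
`R(v,w,z) = ∫ ∑ vⱼ ∂ⱼ∂ₖwᵢ ∂ₖzᵢ` (`conv_eq`). When `v` is divergence free, `R(v,·,·)` is
antisymmetric (`Rf_antisymm`), so `R(u,u,u) = R(u,b,b) = 0` and `R(b,b,u) + R(b,u,b) = 0`: the
left-hand side is `Q(u,u,u) - Q(b,b,u) + Q(u,b,b) - Q(b,u,b)`. Each `Q` is bounded, through the
pointwise Cauchy–Schwarz inequality for Frobenius norms (`abs_trilinear_le`), by the integral of a
product of three gradient norms, and Hölder's inequality (`holder`) concludes.

The components of the fields are handled as scalar Schwartz functions, so that every integrand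
met on the way is integrable.
-/

open MeasureTheory

noncomputable section

/-- Three-dimensional Euclidean space. -/
abbrev E3 : Type := EuclideanSpace ℝ (Fin 3)

/-- The `i`-th standard basis vector of `ℝ³`. -/
def ee (i : Fin 3) : E3 := EuclideanSpace.single i 1

/-- The partial derivative of a scalar function in the `i`-th coordinate direction. -/
def pd (i : Fin 3) (f : E3 → ℝ) : E3 → ℝ := fun x => fderiv ℝ f x (ee i)

/-- The partial derivative of a vector field in the `i`-th coordinate direction. -/
def pdv (i : Fin 3) (u : E3 → E3) : E3 → E3 := fun x => fderiv ℝ u x (ee i)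

/-- The `Lʳ(ℝ³)` norm of a scalar function. -/
def Lnorm (r : ℝ) (f : E3 → ℝ) : ℝ := (eLpNorm f (ENNReal.ofReal r) volume).toReal

/-- The `Lʳ(ℝ³)` norm of a vector field (with the pointwise Euclidean norm). -/
def LnormV (r : ℝ) (u : E3 → E3) : ℝ := (eLpNorm u (ENNReal.ofReal r) volume).toReal

/-- The pointwise (Frobenius) norm of the full gradient matrix of a vector field. -/
def gradNormAt (u : E3 → E3) (x : E3) : ℝ :=
  Real.sqrt (∑ i, ∑ j, (fderiv ℝ u x (ee j) i) ^ 2)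

/-- The squared pointwise Frobenius norm `|∇u|²` of the gradient of a vector field. -/
def frobSq (u : E3 → E3) (x : E3) : ℝ := ∑ i, ∑ j, (fderiv ℝ u x (ee j) i) ^ 2

/-- The `Lʳ` norm of the full gradient of a vector field. -/
def LnormGrad (r : ℝ) (u : E3 → E3) : ℝ := Lnorm r (gradNormAt u)

/-- The `i`-th component of the (componentwise) Laplacian of a vector field. -/
def lapC (u : E3 → E3) (x : E3) (i : Fin 3) : ℝ :=
  ∑ j, fderiv ℝ (fun y => fderiv ℝ u y (ee j) i) x (ee j)

/-- The pointwise Euclidean norm `|Δu|` of the Laplacian of a vector field. -/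
def lapNormAt (u : E3 → E3) (x : E3) : ℝ := Real.sqrt (∑ i, (lapC u x i) ^ 2)

/-- The Laplacian of a scalar function. -/
def lapR (f : E3 → ℝ) (x : E3) : ℝ :=
  ∑ j, fderiv ℝ (fun y => fderiv ℝ f y (ee j)) x (ee j)

/-- The pointwise norm `|∇|w|²|` of the gradient of the squared modulus of a vector field. -/
def gradOfSqNormAt (w : E3 → E3) (x : E3) : ℝ :=
  Real.sqrt (∑ j, (pd j (fun y => ‖w y‖ ^ 2) x) ^ 2)

/-- A vector field is divergence free. -/
def DivFree (u : E3 → E3) : Prop := ∀ x, ∑ i, fderiv ℝ u x (ee i) i = 0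

/-- A vector field is (the coercion of) a Schwartz map. -/
def SchwartzClassV (f : E3 → E3) : Prop := ∃ g : SchwartzMap E3 E3, ⇑g = f

/-- A scalar function is (the coercion of) a Schwartz map. -/
def SchwartzClassR (f : E3 → ℝ) : Prop := ∃ g : SchwartzMap E3 ℝ, ⇑g = f

/-- The `H¹` norm of a vector field: `L²` norm plus `L²` norm of the gradient. -/
def H1norm (f : E3 → E3) : ℝ := LnormV 2 f + LnormGrad 2 f

/-- `(u, b, p)` is a smooth, spatially Schwartz-class solution of the 3D incompressible
MHD equations with unit viscosity and magnetic diffusivity for times in the set `S`: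
`uₜ + (u·∇)u = Δu − ∇p + (b·∇)b`, `bₜ + (u·∇)b = Δb + (b·∇)u`, `∇·u = 0`, `∇·b = 0`. -/
structure MHDSolution (S : Set ℝ) (u b : ℝ → E3 → E3) (p : ℝ → E3 → ℝ) : Prop where
  smooth_u : ContDiffOn ℝ (⊤ : ℕ∞) (fun q : ℝ × E3 => u q.1 q.2) (S ×ˢ Set.univ)
  smooth_b : ContDiffOn ℝ (⊤ : ℕ∞) (fun q : ℝ × E3 => b q.1 q.2) (S ×ˢ Set.univ)
  smooth_p : ContDiffOn ℝ (⊤ : ℕ∞) (fun q : ℝ × E3 => p q.1 q.2) (S ×ˢ Set.univ)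
  schwartz_u : ∀ t ∈ S, SchwartzClassV (u t)
  schwartz_b : ∀ t ∈ S, SchwartzClassV (b t)
  schwartz_p : ∀ t ∈ S, SchwartzClassR (p t)
  div_u : ∀ t ∈ S, DivFree (u t)
  div_b : ∀ t ∈ S, DivFree (b t)
  eq_u : ∀ t ∈ S, ∀ x : E3, ∀ i : Fin 3,
    deriv (fun s => u s x i) t + ∑ j, u t x j * fderiv ℝ (u t) x (ee j) i
      = lapC (u t) x i - pd i (p t) x + ∑ j, b t x j * fderiv ℝ (b t) x (ee j) i
  eq_b : ∀ t ∈ S, ∀ x : E3, ∀ i : Fin 3,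
    deriv (fun s => b s x i) t + ∑ j, u t x j * fderiv ℝ (b t) x (ee j) i
      = lapC (b t) x i + ∑ j, b t x j * fderiv ℝ (u t) x (ee j) i

open scoped LineDeriv SchwartzMap in
/-- The partial derivative in the direction `ee k`, as an operation on Schwartz functions. -/
def sD (k : Fin 3) (f : SchwartzMap E3 ℝ) : SchwartzMap E3 ℝ := ∂_{ee k} f

/-- The pointwise product of two Schwartz functions. -/
def sMul (f g : SchwartzMap E3 ℝ) : SchwartzMap E3 ℝ :=
  SchwartzMap.pairing (ContinuousLinearMap.mul ℝ ℝ) f g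

/-- The `i`-th component of a Schwartz vector field. -/
def sComp (g : SchwartzMap E3 E3) (i : Fin 3) : SchwartzMap E3 ℝ :=
  g.postcompCLM (EuclideanSpace.proj (𝕜 := ℝ) i)

/-- The trilinear form `∫ f g h` on Schwartz functions. -/
def tri (f g h : SchwartzMap E3 ℝ) : ℝ := ∫ x, f x * g x * h x

lemma sD_apply (k : Fin 3) (f : SchwartzMap E3 ℝ) (x : E3) :
    sD k f x = fderiv ℝ f x (ee k) :=
  SchwartzMap.lineDerivOp_apply_eq_fderiv _ _ _

lemma sMul_apply (f g : SchwartzMap E3 ℝ) (x : E3) : sMul f g x = f x * g x := by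
  simp [sMul, SchwartzMap.pairing_apply_apply]

lemma sComp_apply (g : SchwartzMap E3 E3) (i : Fin 3) (x : E3) : sComp g i x = g x i := by
  simp [sComp]

lemma sD_sComp (g : SchwartzMap E3 E3) (i j : Fin 3) (x : E3) :
    sD j (sComp g i) x = fderiv ℝ g x (ee j) i := by
  rw [sD_apply]
  have h := ((EuclideanSpace.proj (𝕜 := ℝ) i : E3 →L[ℝ] ℝ).hasFDerivAt (x := g x)).comp x
    (g.hasFDerivAt x)
  have e : (⇑(sComp g i) : E3 → ℝ) =
      (EuclideanSpace.proj (𝕜 := ℝ) i : E3 →L[ℝ] ℝ) ∘ g := by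
    ext y; simp [sComp_apply]
  rw [e, h.fderiv]; rfl

lemma lapC_eq (g : SchwartzMap E3 E3) (i : Fin 3) (x : E3) :
    lapC g x i = ∑ k, sD k (sD k (sComp g i)) x := by
  simp only [lapC]
  refine Finset.sum_congr rfl fun k _ => ?_
  rw [sD_apply]
  congr 2
  ext y
  rw [sD_sComp]

/-- Partial derivatives of a Schwartz function commute. -/
lemma sD_comm (j k : Fin 3) (f : SchwartzMap E3 ℝ) : sD j (sD k f) = sD k (sD j f) := by
  ext x
  have key : ∀ a b : Fin 3, sD a (sD b f) x = fderiv ℝ (fderiv ℝ f) x (ee a) (ee b) := by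
    intro a b
    have e : (⇑(sD b f) : E3 → ℝ) = fun y => fderiv ℝ f y (ee b) := by
      ext y; exact sD_apply b f y
    have hd : DifferentiableAt ℝ (fderiv ℝ f) x :=
      ((f.smooth 2).fderiv_right (m := 1) (by norm_num)).differentiable (by norm_num) x
    rw [sD_apply, e, fderiv_clm_apply hd (by fun_prop)]
    simp
  rw [key, key]
  exact ((f.smooth 2).contDiffAt.isSymmSndFDerivAt (by simp)) _ _

lemma integrable_tri (f g h : SchwartzMap E3 ℝ) :
    Integrable (fun x => f x * g x * h x) := by
  have := (sMul (sMul f g) h).integrable (μ := volume)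
  refine this.congr (Filter.Eventually.of_forall fun x => ?_)
  simp only [sMul_apply]

/-- Integration by parts for a triple product: `∫ ∂ₖ(f g h) = 0`. -/
lemma tri_ibp (k : Fin 3) (f g h : SchwartzMap E3 ℝ) :
    tri (sD k f) g h + tri f (sD k g) h + tri f g (sD k h) = 0 := by
  have h1 := SchwartzMap.integral_mul_lineDerivOp_right_eq_neg_left (μ := volume)
    (sMul f g) h (ee k)
  have e1 : (∫ x, sMul f g x * sD k h x) = tri f g (sD k h) := by
    simp only [sMul_apply, tri]
  have e2 : (∫ x, sD k (sMul f g) x * h x) = tri (sD k f) g h + tri f (sD k g) h := by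
    rw [tri, tri, ← integral_add (integrable_tri _ _ _) (integrable_tri _ _ _)]
    congr 1; ext x
    have e : (⇑(sMul f g) : E3 → ℝ) = fun y => f y * g y := by
      ext y; exact sMul_apply f g y
    rw [sD_apply, e, fderiv_fun_mul f.differentiableAt g.differentiableAt, sD_apply, sD_apply]
    simp; ring
  change (∫ x, sMul f g x * sD k h x) = - (∫ x, sD k (sMul f g) x * h x) at h1
  rw [e1, e2] at h1
  linarith

/-- The cubic form `∫ ∑ ∂ₖvⱼ ∂ⱼwᵢ ∂ₖzᵢ` left over after integrating the convective term by parts. -/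
def Qf (v w z : Fin 3 → SchwartzMap E3 ℝ) : ℝ :=
  ∑ i, ∑ j, ∑ k, tri (sD k (v j)) (sD j (w i)) (sD k (z i))

/-- The term `∫ ∑ vⱼ ∂ⱼ∂ₖwᵢ ∂ₖzᵢ`, in which the transporting field `v` is not differentiated. -/
def Rf (v w z : Fin 3 → SchwartzMap E3 ℝ) : ℝ :=
  ∑ i, ∑ j, ∑ k, tri (v j) (sD j (sD k (w i))) (sD k (z i))

lemma conv_eq (v w z : Fin 3 → SchwartzMap E3 ℝ) :
    (∑ i, ∑ j, ∑ k, tri (v j) (sD j (w i)) (sD k (sD k (z i)))) = - Qf v w z - Rf v w z := by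
  rw [Qf, Rf, ← sub_eq_zero]
  simp only [← Finset.sum_neg_distrib, ← Finset.sum_sub_distrib]
  refine Finset.sum_eq_zero fun i _ => Finset.sum_eq_zero fun j _ =>
    Finset.sum_eq_zero fun k _ => ?_
  have := tri_ibp k (v j) (sD j (w i)) (sD k (z i))
  rw [sD_comm k j] at this
  linarith

/-- Transport by a divergence-free field is antisymmetric: `v·∇` applied to `∂ₖwᵢ ∂ₖzᵢ` has zero
integral. -/
lemma Rf_antisymm (v w z : Fin 3 → SchwartzMap E3 ℝ) (hv : ∀ x, ∑ j, sD j (v j) x = 0) :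
    Rf v w z + Rf v z w = 0 := by
  have hdiv : ∀ g h, ∑ j, tri (sD j (v j)) g h = 0 := by
    intro g h
    simp only [tri]
    rw [← integral_finsetSum _ fun j _ => integrable_tri _ _ _]
    simp [← Finset.sum_mul, hv]
  have hs : ∀ i k : Fin 3, ∑ j, (tri (v j) (sD j (sD k (w i))) (sD k (z i))
      + tri (v j) (sD j (sD k (z i))) (sD k (w i))) = 0 := by
    intro i k
    rw [← neg_eq_zero, ← hdiv (sD k (w i)) (sD k (z i)), ← Finset.sum_neg_distrib]
    refine Finset.sum_congr rfl fun j _ => ?_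
    have := tri_ibp j (v j) (sD k (w i)) (sD k (z i))
    have sw : tri (v j) (sD j (sD k (z i))) (sD k (w i))
        = tri (v j) (sD k (w i)) (sD j (sD k (z i))) := by
      simp only [tri]; congr 1; ext x; ring
    rw [sw]; linarith
  simp only [Rf, ← Finset.sum_add_distrib]
  refine Finset.sum_eq_zero fun i _ => ?_
  rw [Finset.sum_comm]
  exact Finset.sum_eq_zero fun k _ => hs i k

lemma integral_conv (v w z : SchwartzMap E3 E3) :
    (∫ x : E3, ∑ i, (∑ j, v x j * fderiv ℝ w x (ee j) i) * lapC z x i)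
      = - Qf (sComp v) (sComp w) (sComp z) - Rf (sComp v) (sComp w) (sComp z) := by
  rw [← conv_eq]
  simp only [tri]
  simp_rw [← sD_sComp, ← sComp_apply v, lapC_eq, Finset.sum_mul_sum]
  rw [integral_finsetSum _ fun i _ => integrable_finsetSum _ fun j _ =>
    integrable_finsetSum _ fun k _ => integrable_tri _ _ _]
  refine Finset.sum_congr rfl fun i _ => ?_
  rw [integral_finsetSum _ fun j _ => integrable_finsetSum _ fun k _ => integrable_tri _ _ _]
  refine Finset.sum_congr rfl fun j _ => ?_
  rw [integral_finsetSum _ fun k _ => integrable_tri _ _ _]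

/-- Two applications of Cauchy–Schwarz: `|tr (B A Cᵀ)| ≤ |A| |B| |C|` in Frobenius norms. -/
lemma abs_trilinear_le (A B C : Fin 3 → Fin 3 → ℝ) :
    |∑ i, ∑ j, ∑ k, A j k * B i j * C i k| ≤
      √(∑ i, ∑ j, A i j ^ 2) * √(∑ i, ∑ j, B i j ^ 2) * √(∑ i, ∑ j, C i j ^ 2) := by
  rw [← Real.sqrt_mul (by positivity), ← Real.sqrt_mul (by positivity)]
  apply Real.abs_le_sqrt
  have e : ∑ i, ∑ j, ∑ k, A j k * B i j * C i k
      = ∑ p : Fin 3 × Fin 3, (∑ j, B p.1 j * A j p.2) * C p.1 p.2 := by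
    rw [Fintype.sum_prod_type]
    refine Finset.sum_congr rfl fun i _ => ?_
    rw [Finset.sum_comm]
    refine Finset.sum_congr rfl fun k _ => ?_
    rw [Finset.sum_mul]
    refine Finset.sum_congr rfl fun j _ => by ring
  rw [e]
  refine (Finset.sum_mul_sq_le_sq_mul_sq _ _ _).trans ?_
  rw [Fintype.sum_prod_type, Fintype.sum_prod_type]
  refine mul_le_mul_of_nonneg_right ?_ (by positivity)
  calc _ ≤ ∑ i, ∑ k, (∑ j, B i j ^ 2) * (∑ j, A j k ^ 2) :=
        Finset.sum_le_sum fun i _ => Finset.sum_le_sum fun k _ =>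
          Finset.sum_mul_sq_le_sq_mul_sq _ _ _
    _ = _ := by
        simp_rw [← Finset.mul_sum, ← Finset.sum_mul]
        rw [mul_comm, Finset.sum_comm (f := fun i j => A j i ^ 2)]

lemma gradNormAt_nonneg (u : E3 → E3) (x : E3) : 0 ≤ gradNormAt u x := Real.sqrt_nonneg _

lemma gradNormAt_memLp (g : SchwartzMap E3 E3) (p : ENNReal) :
    MemLp (gradNormAt g) p volume := by
  have hs : MemLp (fun x => ∑ i, ∑ j, ‖sD j (sComp g i) x‖) p volume :=
    memLp_finsetSum _ fun i _ => memLp_finsetSum _ fun j _ =>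
      ((sD j (sComp g i)).memLp p volume).norm
  have e : gradNormAt g = fun x => √(∑ i, ∑ j, (sD j (sComp g i) x) ^ 2) := by
    ext x; simp only [gradNormAt, sD_sComp]
  refine hs.mono ?_ (Filter.Eventually.of_forall fun x => ?_)
  · rw [e]
    refine Continuous.aestronglyMeasurable ?_
    have : ∀ i j, Continuous (sD j (sComp g i)) := fun i j => (sD j (sComp g i)).continuous
    fun_prop
  · rw [e, Real.norm_of_nonneg (Real.sqrt_nonneg _), Real.norm_of_nonneg (by positivity)]
    refine Real.sqrt_le_iff.2 ⟨by positivity, ?_⟩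
    simp_rw [← sq_abs (sD _ _ x), ← Real.norm_eq_abs]
    rw [← Fintype.sum_prod_type' (f := fun i j => ‖sD j (sComp g i) x‖ ^ 2),
      ← Fintype.sum_prod_type' (f := fun i j => ‖sD j (sComp g i) x‖)]
    exact Finset.sum_sq_le_sq_sum_of_nonneg fun p _ => norm_nonneg _

lemma LnormGrad_eq (g : SchwartzMap E3 E3) :
    LnormGrad 3 g = (∫ x, gradNormAt g x ^ (3 : ℝ)) ^ (1 / 3 : ℝ) := by
  have h := gradNormAt_memLp g (ENNReal.ofReal 3)
  rw [LnormGrad, Lnorm, h.eLpNorm_eq_integral_rpow_norm (by simp) (by simp),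
    ENNReal.toReal_ofReal (by positivity)]
  simp [Real.norm_of_nonneg (gradNormAt_nonneg _ _)]

/-- Hölder's inequality with exponents `3` and `3/2`. -/
lemma holder (u b : SchwartzMap E3 E3) :
    ∫ x, gradNormAt u x * gradNormAt b x ^ 2 ≤ LnormGrad 3 u * LnormGrad 3 b ^ 2 := by
  have hpq : (3 : ℝ).HolderConjugate (3 / 2) := by
    rw [Real.holderConjugate_iff]; norm_num
  have hb : MemLp (fun x => gradNormAt b x ^ 2) (ENNReal.ofReal (3 / 2)) volume := by
    have := (gradNormAt_memLp b 3).norm_rpow_div 2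
    convert this using 1
    · ext x; simp
    · rw [ENNReal.ofReal_div_of_pos (by norm_num)]; simp
  have h := integral_mul_le_Lp_mul_Lq_of_nonneg (μ := volume) hpq
    (f := gradNormAt u) (g := fun x => gradNormAt b x ^ 2)
    (Filter.Eventually.of_forall fun x => gradNormAt_nonneg _ _)
    (Filter.Eventually.of_forall fun x => by positivity) (gradNormAt_memLp u _) hb
  refine h.trans (le_of_eq ?_)
  rw [LnormGrad_eq, LnormGrad_eq]
  congr 1
  have e : ∀ x, (gradNormAt b x ^ 2) ^ (3 / 2 : ℝ) = gradNormAt b x ^ (3 : ℝ) := by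
    intro x
    rw [← Real.rpow_natCast, ← Real.rpow_mul (gradNormAt_nonneg _ _)]
    norm_num
  simp_rw [e]
  rw [← Real.rpow_natCast, ← Real.rpow_mul
    (integral_nonneg fun x => Real.rpow_nonneg (gradNormAt_nonneg _ _) _)]
  norm_num

lemma abs_Qf_le (v w z : SchwartzMap E3 E3) :
    |Qf (sComp v) (sComp w) (sComp z)| ≤
      ∫ x, gradNormAt v x * gradNormAt w x * gradNormAt z x := by
  have e : Qf (sComp v) (sComp w) (sComp z) = ∫ x, ∑ i, ∑ j, ∑ k,
      sD k (sComp v j) x * sD j (sComp w i) x * sD k (sComp z i) x := by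
    simp only [Qf, tri]
    rw [integral_finsetSum _ fun i _ => integrable_finsetSum _ fun j _ =>
      integrable_finsetSum _ fun k _ => integrable_tri _ _ _]
    refine Finset.sum_congr rfl fun i _ => ?_
    rw [integral_finsetSum _ fun j _ => integrable_finsetSum _ fun k _ => integrable_tri _ _ _]
    refine Finset.sum_congr rfl fun j _ => ?_
    rw [integral_finsetSum _ fun k _ => integrable_tri _ _ _]
  rw [e, ← Real.norm_eq_abs]
  refine norm_integral_le_of_norm_le ?_ (Filter.Eventually.of_forall fun x => ?_)
  · -- Gradient norms lie in every `Lᵖ`; the exponents `4, 4, 2` give integrability of the product.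
    have h1 : MemLp (fun x => gradNormAt v x * gradNormAt w x) 2 volume :=
      (gradNormAt_memLp w 4).mul (p := 4) (q := 4) (gradNormAt_memLp v 4)
        (hpqr := ⟨by
          rw [← two_mul, show (4 : ENNReal) = 2 * 2 by norm_num,
            ENNReal.mul_inv (by simp) (by simp), ← mul_assoc,
            ENNReal.mul_inv_cancel (by simp) (by simp), one_mul]⟩)
    exact h1.integrable_mul (gradNormAt_memLp z 2)
  · rw [Real.norm_eq_abs]
    simpa only [gradNormAt, sD_sComp] using abs_trilinear_le
      (fun j k => sD k (sComp v j) x) (fun i j => sD j (sComp w i) x)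
      (fun i k => sD k (sComp z i) x)

/-- **The bound (2.9).** For divergence-free Schwartz vector fields `u, b` on `ℝ³`,
`−∫(u·∇u)·Δu + ∫(b·∇b)·Δu − ∫(u·∇b)·Δb + ∫(b·∇u)·Δb ≤ ‖∇u‖₃³ + 3‖∇u‖₃‖∇b‖₃²`. -/
theorem stmt7 (u b : E3 → E3) (hu : SchwartzClassV u) (hb : SchwartzClassV b)
    (hdu : DivFree u) (hdb : DivFree b) :
    -(∫ x : E3, ∑ i, (∑ j, u x j * fderiv ℝ u x (ee j) i) * lapC u x i)
      + (∫ x : E3, ∑ i, (∑ j, b x j * fderiv ℝ b x (ee j) i) * lapC u x i)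
      - (∫ x : E3, ∑ i, (∑ j, u x j * fderiv ℝ b x (ee j) i) * lapC b x i)
      + (∫ x : E3, ∑ i, (∑ j, b x j * fderiv ℝ u x (ee j) i) * lapC b x i)
    ≤ (LnormGrad 3 u) ^ 3 + 3 * LnormGrad 3 u * (LnormGrad 3 b) ^ 2 := by
  obtain ⟨u, rfl⟩ := hu
  obtain ⟨b, rfl⟩ := hb
  have du : ∀ x, ∑ j, sD j (sComp u j) x = 0 := fun x => by simpa only [sD_sComp] using hdu x
  have db : ∀ x, ∑ j, sD j (sComp b j) x = 0 := fun x => by simpa only [sD_sComp] using hdb x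
  rw [integral_conv, integral_conv, integral_conv, integral_conv]
  have r1 := Rf_antisymm _ (sComp u) (sComp u) du
  have r2 := Rf_antisymm _ (sComp b) (sComp b) du
  have r3 := Rf_antisymm _ (sComp u) (sComp b) db
  have q1 := abs_Qf_le u u u
  have q2 := abs_Qf_le b b u
  have q3 := abs_Qf_le u b b
  have q4 := abs_Qf_le b u b
  have h1 := holder u u
  have h2 := holder u b
  have e1 : ∀ x, gradNormAt u x * gradNormAt u x * gradNormAt u x
      = gradNormAt u x * gradNormAt u x ^ 2 := fun x => by ring
  have e2 : ∀ x, gradNormAt b x * gradNormAt b x * gradNormAt u x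
      = gradNormAt u x * gradNormAt b x ^ 2 := fun x => by ring
  have e3 : ∀ x, gradNormAt u x * gradNormAt b x * gradNormAt b x
      = gradNormAt u x * gradNormAt b x ^ 2 := fun x => by ring
  have e4 : ∀ x, gradNormAt b x * gradNormAt u x * gradNormAt b x
      = gradNormAt u x * gradNormAt b x ^ 2 := fun x => by ring
  simp_rw [e1] at q1
  simp_rw [e2] at q2
  simp_rw [e3] at q3
  simp_rw [e4] at q4
  have a1 := (abs_le.1 q1).2
  have a2 := (abs_le.1 q2).1
  have a3 := (abs_le.1 q3).2
  have a4 := (abs_le.1 q4).1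
  have c : LnormGrad 3 u ^ 3 = LnormGrad 3 u * LnormGrad 3 u ^ 2 := by ring
  rw [c]
  linarith
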